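/- Let S be a ℂ-submodule of (m × n → ℂ). Then the following are equivalent: (a) there exists a nonzero matrix T : Matrix (m × n) (m × n) ℂ supported on S with trB T = 0; (b) there exist two distinct density matrices ρ1 ≠ ρ2, both supported on S, with trB ρ1 = trB ρ2. -/

import Mathlib

open scoped ComplexOrder

noncomputable section

/-- Partial trace over the second factor. -/
def trB {m n : Type*} [Fintype n] (ρ : Matrix (m × n) (m × n) ℂ) : Matrix m m ℂ :=
  Matrix.of fun i i' => ∑ j, ρ (i, j) (i', j)

/-- Partial trace over the first factor. -/
def trA {m n : Type*} [Fintype m] (ρ : Matrix (m × n) (m × n) ℂ) : Matrix n n ℂ :=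
  Matrix.of fun j j' => ∑ i, ρ (i, j) (i, j')

/-- The outer product `|ψ⟩⟨φ|`. -/
def outer {k : Type*} (ψ φ : k → ℂ) : Matrix k k ℂ :=
  Matrix.of fun x y => ψ x * (starRingEnd ℂ) (φ y)

/-- A density matrix: positive semidefinite with trace one. -/
def IsDensity {k : Type*} [Fintype k] (ρ : Matrix k k ℂ) : Prop :=
  ρ.PosSemidef ∧ ρ.trace = 1

/-- `P` is the matrix of the orthogonal projection onto the submodule `S`. -/
def IsOrthProjOnto {k : Type*} [Fintype k] (S : Submodule ℂ (k → ℂ)) (P : Matrix k k ℂ) : Prop :=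
  P.IsHermitian ∧ P * P = P ∧ (∀ x, P.mulVec x ∈ S) ∧ ∀ y ∈ S, P.mulVec y = y

/-- `T` is supported on `S`: `P * T * P = T` for the orthogonal projection `P` onto `S`. -/
def SupportedOn {k : Type*} [Fintype k] (S : Submodule ℂ (k → ℂ)) (T : Matrix k k ℂ) : Prop :=
  ∃ P, IsOrthProjOnto S P ∧ P * T * P = T

/-- The set of reduced density matrices on the first factor. -/
def DB {m n : Type*} [Fintype m] [Fintype n] (S : Submodule ℂ (m × n → ℂ)) :
    Set (Matrix m m ℂ) :=
  {σ | ∃ ρ, IsDensity ρ ∧ SupportedOn S ρ ∧ trB ρ = σ}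

theorem aux_proj_unique {k : Type*} [Fintype k] [DecidableEq k] {S : Submodule ℂ (k → ℂ)}
    {P Q : Matrix k k ℂ} (hP : IsOrthProjOnto S P) (hQ : IsOrthProjOnto S Q) : P = Q := by
  have key : ∀ {P Q : Matrix k k ℂ}, IsOrthProjOnto S P → IsOrthProjOnto S Q → P * Q = Q := by
    intro P Q hP hQ
    apply Matrix.ext_of_mulVec_single
    intro i
    rw [← Matrix.mulVec_mulVec]
    exact hP.2.2.2 _ (hQ.2.2.1 _)
  have h1 := key hP hQ
  have h2 := key hQ hP
  have h3 := congrArg Matrix.conjTranspose h1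
  rw [Matrix.conjTranspose_mul, hP.1.eq, hQ.1.eq] at h3
  exact h2.symm.trans h3

theorem aux_trB_add {m n : Type*} [Fintype n] (A B : Matrix (m × n) (m × n) ℂ) :
    trB (A + B) = trB A + trB B := by
  ext i j; simp [trB, Finset.sum_add_distrib]

theorem aux_trB_sub {m n : Type*} [Fintype n] (A B : Matrix (m × n) (m × n) ℂ) :
    trB (A - B) = trB A - trB B := by
  ext i j; simp [trB, Finset.sum_sub_distrib]

theorem aux_trB_smul {m n : Type*} [Fintype n] (c : ℂ) (A : Matrix (m × n) (m × n) ℂ) :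
    trB (c • A) = c • trB A := by
  ext i j; simp [trB, Finset.mul_sum]

theorem aux_trB_conj {m n : Type*} [Fintype n] (A : Matrix (m × n) (m × n) ℂ) :
    trB A.conjTranspose = (trB A).conjTranspose := by
  ext i j; simp [trB]

theorem aux_trace_trB {m n : Type*} [Fintype m] [Fintype n] (A : Matrix (m × n) (m × n) ℂ) :
    (trB A).trace = A.trace := by
  simp [trB, Matrix.trace, Fintype.sum_prod_type]

theorem aux_density {k : Type*} [Fintype k] {A : Matrix k k ℂ} (hA : A.PosSemidef)
    (h : A.trace ≠ 0) : IsDensity (A.trace⁻¹ • A) := by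
  refine ⟨hA.smul ?_, ?_⟩
  · exact inv_nonneg.2 hA.trace_nonneg
  · rw [Matrix.trace_smul, smul_eq_mul, inv_mul_cancel₀ h]

theorem aux_forward {m n : Type*} [Fintype m] [Fintype n] [DecidableEq m] [DecidableEq n]
    {S : Submodule ℂ (m × n → ℂ)} {P H : Matrix (m × n) (m × n) ℂ} (hP : IsOrthProjOnto S P)
    (hH : H.conjTranspose = H) (h0 : H ≠ 0) (hs : P * H * P = H) (ht : trB H = 0) :
    (∃ ρ1 ρ2 : Matrix (m × n) (m × n) ℂ, ρ1 ≠ ρ2 ∧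
      IsDensity ρ1 ∧ SupportedOn S ρ1 ∧ IsDensity ρ2 ∧ SupportedOn S ρ2 ∧
      trB ρ1 = trB ρ2) := by
  have hPP := hP.2.1
  have hl : P * H = H := by
    rw [← hs, ← mul_assoc, ← mul_assoc, hPP]
  have hr : H * P = H := by
    rw [← hs, mul_assoc, hPP]
  set A := (P + H).conjTranspose * (P + H) with hA
  set B := (P - H).conjTranspose * (P - H) with hB
  have eA : A = P + H * H + (2 : ℂ) • H := by
    rw [hA, Matrix.conjTranspose_add, hP.1.eq, hH, add_mul, mul_add, mul_add, hPP, hl, hr, two_smul]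
    abel
  have eB : B = P + H * H - (2 : ℂ) • H := by
    rw [hB, Matrix.conjTranspose_sub, hP.1.eq, hH, sub_mul, mul_sub, mul_sub, hPP, hl, hr, two_smul]
    abel
  have tAB : trB A = trB B := by
    rw [eA, eB, aux_trB_add, aux_trB_sub, aux_trB_smul, ht]; simp
  have trAB : A.trace = B.trace := by
    rw [← aux_trace_trB, ← aux_trace_trB, tAB]
  have hAp : A.PosSemidef := Matrix.posSemidef_conjTranspose_mul_self _
  have hBp : B.PosSemidef := Matrix.posSemidef_conjTranspose_mul_self _
  have hne : A ≠ B := by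
    intro h
    have h4 : (4 : ℂ) • H = A - B := by rw [eA, eB]; module
    rw [h, sub_self] at h4
    exact h0 ((smul_eq_zero.1 h4).resolve_left (by norm_num))
  have htr : A.trace ≠ 0 := by
    intro h
    exact hne ((hAp.trace_eq_zero_iff.1 h).trans (hBp.trace_eq_zero_iff.1 (trAB ▸ h)).symm)
  have htr' : B.trace ≠ 0 := trAB ▸ htr
  have hHH : P * (H * H) * P = H * H := by
    rw [← mul_assoc, hl, mul_assoc, hr]
  refine ⟨A.trace⁻¹ • A, B.trace⁻¹ • B, ?_, aux_density hAp htr, ⟨P, hP, ?_⟩,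
    aux_density hBp htr', ⟨P, hP, ?_⟩, ?_⟩
  · rw [trAB]
    intro h
    exact hne (smul_right_injective _ (inv_ne_zero htr') h)
  · rw [Matrix.mul_smul, Matrix.smul_mul]
    congr 1
    rw [eA, mul_add, add_mul, mul_add, add_mul, hHH, Matrix.mul_smul, Matrix.smul_mul, hs, hPP, hPP]
  · rw [Matrix.mul_smul, Matrix.smul_mul]
    congr 1
    rw [eB, mul_sub, sub_mul, mul_add, add_mul, hHH, Matrix.mul_smul, Matrix.smul_mul, hs, hPP, hPP]
  · rw [aux_trB_smul, aux_trB_smul, trAB, tAB]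

theorem nontrivial_kernel_iff_nonunique_preimage
    {m n : Type*} [Fintype m] [Fintype n] [DecidableEq m] [DecidableEq n]
    (S : Submodule ℂ (m × n → ℂ)) :
    (∃ T : Matrix (m × n) (m × n) ℂ, T ≠ 0 ∧ SupportedOn S T ∧ trB T = 0) ↔
    (∃ ρ1 ρ2 : Matrix (m × n) (m × n) ℂ, ρ1 ≠ ρ2 ∧
      IsDensity ρ1 ∧ SupportedOn S ρ1 ∧ IsDensity ρ2 ∧ SupportedOn S ρ2 ∧
      trB ρ1 = trB ρ2) := by
  constructor
  · rintro ⟨T, h0, ⟨P, hP, hs⟩, ht⟩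
    by_cases h : T + T.conjTranspose = 0
    · have hc : T.conjTranspose = -T := (neg_eq_of_add_eq_zero_right h).symm
      refine aux_forward (H := Complex.I • T) hP ?_ ?_ ?_ ?_
      · rw [Matrix.conjTranspose_smul, hc]; simp
      · exact smul_ne_zero Complex.I_ne_zero h0
      · rw [Matrix.mul_smul, Matrix.smul_mul, hs]
      · rw [aux_trB_smul, ht, smul_zero]
    · refine aux_forward (H := T + T.conjTranspose) hP ?_ h ?_ ?_
      · rw [Matrix.conjTranspose_add, Matrix.conjTranspose_conjTranspose, add_comm]
      · have h2 := congrArg Matrix.conjTranspose hs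
        rw [Matrix.conjTranspose_mul, Matrix.conjTranspose_mul, hP.1.eq, ← mul_assoc] at h2
        rw [mul_add, add_mul, hs, h2]
      · rw [aux_trB_add, aux_trB_conj, ht]; simp
  · rintro ⟨ρ1, ρ2, hne, -, ⟨P, hP, h1⟩, -, ⟨Q, hQ, h2⟩, ht⟩
    obtain rfl := aux_proj_unique hP hQ
    exact ⟨ρ1 - ρ2, sub_ne_zero.2 hne, ⟨P, hP, by rw [mul_sub, sub_mul, h1, h2]⟩,
      by rw [aux_trB_sub, ht, sub_self]⟩

end
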